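/- Suppose n ≡ 3 (mod 4). If φ is an (n+1)/2-isometry of C_n fixing 0̄ that is not an even isometry, then one of the following three possibilities holds: (I) φ coincides on E with some even isometry, and there exist a σ_{i,j}-mapping τ and an even-weight word a such that φ coincides with T_a ∘ τ on O; (II) there is a σ_{i,j}-mapping τ such that φ coincides with τ on E, and φ coincides on O with some even isometry; (III) there exist a σ_{i,j}-mapping τ_1, a σ_{k,l}-mapping τ_2 and an even-weight word a such that φ coincides with τ_1 on E and with T_a ∘ τ_2 on O. -/

import Mathlib

/-- The `σ_{i,j}`-mapping of the Boolean cube `C_n` associated with coordinates `i, j` and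
a bijection `σ : {1,…,n} \ {i} → {1,…,n} \ {j}`. -/
def sigmaMap (n : ℕ) (i j : Fin n)
    (σ : {k : Fin n // k ≠ i} ≃ {k : Fin n // k ≠ j}) :
    (Fin n → ZMod 2) → Fin n → ZMod 2 :=
  fun c k => if h : k = j then c i else c (σ.symm ⟨k, h⟩).1 + c i

/-!
Adjoin to a word of `C_n` a coordinate `none` with value `0` and identify complementary words of
length `n + 1`: this turns `C_n` into the folded `(n + 1)`-cube, with distance `min d (n + 1 - d)`.
For `p = (n + 1) / 2`, two words at distance `2 * k` have
`k.centralBinom * (p - k).centralBinom / 2` common neighbours at distance `p`, and this number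
determines `min k (p - k)`. A `p`-isometry therefore preserves the folded distance between words
whose weights have the same parity.

If `4 ∣ n + 1`, a map preserving the folded distance of even words and fixing `0` acts on them as a
permutation of the `n + 1` coordinates. Indeed the words supported on the pairs `{o, a}`, `a ≠ o`,
are pairwise at distance `2`, so up to complementation their images are pairs through a common
coordinate, which defines the permutation; and a word is determined up to complementation by which
pairs are as far from it as `0` is.

Seen in `C_n`, a permutation of the `n + 1` coordinates is a permutation of coordinates if it fixes
`none` and a `σ_{i,j}`-mapping otherwise. On `E` this applies to `φ` itself, and on `O = E + 1` to
`x ↦ φ (1 + x) + φ 1`.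
-/

namespace BooleanCube

open Finset
open scoped symmDiff

theorem mem_iff_of_injective_of_mapsTo {α : Type*} [Finite α] {f : α → α}
    (hf : Function.Injective f) {A : Set α} (hA : Set.MapsTo f A A) {x : α} :
    f x ∈ A ↔ x ∈ A := by
  have himage : f '' A = A := Set.eq_of_subset_of_ncard_le hA.image_subset
    (Set.ncard_image_of_injective A hf).ge
  simpa only [himage] using hf.mem_set_image (s := A) (a := x)

theorem card_symmDiff_add_two_mul_card_inter {α : Type*} [DecidableEq α] (s t : Finset α) :
    #(s ∆ t) + 2 * #(s ∩ t) = #s + #t := by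
  have hst : #(s ∆ t) = #(s \ t) + #(t \ s) := card_union_of_disjoint disjoint_sdiff_sdiff
  have hs := card_sdiff_add_card_inter s t
  have ht := card_sdiff_add_card_inter t s
  rw [inter_comm] at ht
  omega

theorem exists_forall_mem_of_intersecting {α : Type*} [DecidableEq α] {F : Finset (Finset α)}
    (hcard : ∀ s ∈ F, #s = 2) (hF : (F : Set (Finset α)).Intersecting) (h4 : 4 ≤ #F) :
    ∃ q, ∀ s ∈ F, q ∈ s := by
  by_contra! hno
  obtain ⟨s, hs⟩ : F.Nonempty := card_pos.1 (by omega)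
  obtain ⟨a, b, hab, rfl⟩ := card_eq_two.1 (hcard s hs)
  have hinter {s t : Finset α} (hs : s ∈ F) (ht : t ∈ F) : ∃ i ∈ s, i ∈ t :=
    not_disjoint_iff.1 (hF hs ht)
  obtain ⟨t, ht, hat⟩ := hno a
  obtain ⟨c, hc, rfl⟩ : ∃ c, b ≠ c ∧ t = {b, c} := by
    have hbt : b ∈ t := by grind
    obtain ⟨c, hc⟩ := card_eq_one.1 ((card_erase_of_mem hbt).trans (by rw [hcard t ht]))
    grind
  obtain ⟨u, hu, hbu⟩ := hno b
  obtain rfl : {a, c} = u := by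
    have hac : a ≠ c := by grind
    refine eq_of_subset_of_card_le ?_ (by rw [hcard u hu, card_pair hac])
    grind
  have hsub : F ⊆ powersetCard 2 {a, b, c} := by
    intro w hw
    obtain ⟨x, y, hxy, rfl⟩ := card_eq_two.1 (hcard w hw)
    obtain ⟨i, hi, hiw⟩ := hinter hs hw
    obtain ⟨j, hj, hjw⟩ := hinter ht hw
    obtain ⟨k, hk, hkw⟩ := hinter hu hw
    refine mem_powersetCard.2 ⟨?_, card_pair hxy⟩
    clear hinter hno hcard
    grind
  have := h4.trans (card_le_card hsub)
  rw [card_powersetCard] at this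
  have := this.trans (Nat.choose_le_choose 2 (card_le_three (a := a) (b := b) (c := c)))
  simp [Nat.choose] at this

section HammingDist

variable {V : Type*} [Fintype V]

theorem hammingDist_eq_hammingNorm_add (x y : V → ZMod 2) :
    hammingDist x y = hammingNorm (x + y) := by
  rw [hammingDist_eq_hammingNorm, ZModModule.neg_eq_self]

theorem hammingDist_add_left {M : Type*} [DecidableEq M] [Add M] [IsLeftCancelAdd M]
    (w x y : V → M) :
    hammingDist (w + x) (w + y) = hammingDist x y := by
  simp [hammingDist]

theorem hammingDist_comp_equiv {W M : Type*} [Fintype W] [DecidableEq M] (e : W ≃ V)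
    (x y : V → M) : hammingDist (x ∘ e) (y ∘ e) = hammingDist x y :=
  card_equiv e (by simp)

end HammingDist

section Support

variable {V : Type*} [Fintype V] [DecidableEq V]

/-- Binary words on the coordinate set `V` are identified with finsets of coordinates via their
supports. -/
def supportEquiv : (V → ZMod 2) ≃ Finset V where
  toFun z := {i | z i ≠ 0}
  invFun s i := if i ∈ s then 1 else 0
  left_inv z := by
    funext i
    have h : z i ≠ 0 ↔ z i = 1 := by generalize z i = a; decide +revert
    by_cases hi : z i = 0 <;> simp_all
  right_inv s := by ext; simp

theorem mem_supportEquiv {z : V → ZMod 2} {i : V} : i ∈ supportEquiv z ↔ z i ≠ 0 := by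
  simp [supportEquiv]

theorem card_supportEquiv (z : V → ZMod 2) : #(supportEquiv z) = hammingNorm z := rfl

theorem supportEquiv_add (x y : V → ZMod 2) :
    supportEquiv (x + y) = supportEquiv x ∆ supportEquiv y := by
  ext i
  simp only [mem_symmDiff, mem_supportEquiv, Pi.add_apply]
  generalize x i = a, y i = b
  decide +revert

theorem hammingDist_add_two_mul_card_inter (x y : V → ZMod 2) :
    hammingDist x y + 2 * #(supportEquiv x ∩ supportEquiv y) = hammingNorm x + hammingNorm y := by
  rw [hammingDist_eq_hammingNorm_add, ← card_supportEquiv, supportEquiv_add,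
    card_symmDiff_add_two_mul_card_inter, card_supportEquiv, card_supportEquiv]

end Support

section Parity

variable {V : Type*} [Fintype V]

theorem even_hammingDist_iff (x y : V → ZMod 2) :
    Even (hammingDist x y) ↔ (Even (hammingNorm x) ↔ Even (hammingNorm y)) := by
  classical
  have := hammingDist_add_two_mul_card_inter x y
  grind

theorem even_hammingDist_of_hammingDist_eq {x y z : V → ZMod 2}
    (h : hammingDist x z = hammingDist y z) : Even (hammingDist x y) := by
  have hx := even_hammingDist_iff x z
  have hy := even_hammingDist_iff y z
  rw [h] at hx
  rw [even_hammingDist_iff]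
  tauto

theorem hammingNorm_add_one (z : V → ZMod 2) :
    hammingNorm (z + 1) + hammingNorm z = Fintype.card V := by
  classical
  have h : supportEquiv (1 : V → ZMod 2) = univ := by ext; simp [mem_supportEquiv]
  rw [← card_supportEquiv, supportEquiv_add, h, ← top_eq_univ, symmDiff_top, hnot_eq_compl,
    ← card_supportEquiv, card_compl_add_card]

end Parity

section CommonNeighbors

variable {V : Type*} [Fintype V] [DecidableEq V]

theorem card_filter_card_inter_card_sdiff (t : Finset V) (a b : ℕ) :
    #{s : Finset V | #(s ∩ t) = a ∧ #(s \ t) = b} =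
      (#t).choose a * (Fintype.card V - #t).choose b := by
  have hinter {s u : Finset V} (hs : s ⊆ t) (hu : u ⊆ tᶜ) : (s ∪ u) ∩ t = s := by
    grind [mem_compl]
  have hsdiff {s u : Finset V} (hs : s ⊆ t) (hu : u ⊆ tᶜ) : (s ∪ u) \ t = u := by
    grind [mem_compl]
  rw [← card_compl, ← card_powersetCard, ← card_powersetCard, ← card_product]
  refine card_nbij' (fun s ↦ (s ∩ t, s \ t)) (fun q ↦ q.1 ∪ q.2) ?_ ?_ ?_ ?_
  · intro s hs
    have : s \ t ⊆ tᶜ := by rw [sdiff_eq_inter_compl]; exact inter_subset_right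
    simp_all
  · rintro ⟨s, u⟩ hsu
    simp only [mem_coe, mem_product, mem_powersetCard] at hsu
    obtain ⟨⟨hs, hsa⟩, hu, hub⟩ := hsu
    simp [hinter hs hu, hsdiff hs hu, hsa, hub]
  · intro s _
    exact sup_inf_sdiff s t
  · rintro ⟨s, u⟩ hsu
    simp only [mem_coe, mem_product, mem_powersetCard] at hsu
    exact Prod.ext (hinter hsu.1.1 hsu.2.1) (hsdiff hsu.1.1 hsu.2.1)

theorem card_filter_hammingDist {p k : ℕ} (hkp : k ≤ p) {x y : V → ZMod 2}
    (hxy : hammingDist x y = 2 * k) :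
    #{z | hammingDist x z = p ∧ hammingDist y z = p} =
      (2 * k).choose k * (Fintype.card V - 2 * k).choose (p - k) := by
  rw [hammingDist_eq_hammingNorm_add] at hxy
  rw [← hxy, ← card_supportEquiv, ← card_filter_card_inter_card_sdiff]
  refine card_equiv ((Equiv.addLeft x).trans supportEquiv) fun z ↦ ?_
  have hyz : hammingDist y z = hammingDist (x + z) (x + y) := by
    rw [hammingDist_add_left, hammingDist_comm]
  have hinter := hammingDist_add_two_mul_card_inter (x + z) (x + y)
  have hsdiff := card_sdiff_add_card_inter (supportEquiv (x + z)) (supportEquiv (x + y))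
  rw [card_supportEquiv] at hsdiff
  simp only [mem_filter, mem_univ, true_and, Equiv.trans_apply, Equiv.coe_addLeft, hyz,
    hammingDist_eq_hammingNorm_add x z]
  omega

theorem two_mul_card_filter_hammingDist {p k : ℕ} (hp : Fintype.card V + 1 = 2 * p)
    {x y : V → ZMod 2} (hxy : hammingDist x y = 2 * k) :
    2 * #{z | hammingDist x z = p ∧ hammingDist y z = p} =
      k.centralBinom * (p - k).centralBinom := by
  have hle : hammingDist x y ≤ Fintype.card V := hammingDist_le_card_fintype
  obtain ⟨r, rfl⟩ : ∃ r, p = k + r + 1 := ⟨p - k - 1, by omega⟩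
  have hr : (r + 1).centralBinom = 2 * (2 * r + 1).choose (r + 1) := by
    rw [Nat.centralBinom_eq_two_mul_choose, mul_add_one, Nat.choose_succ_succ,
      Nat.choose_symm_half, ← two_mul]
  rw [card_filter_hammingDist (by omega) hxy, show Fintype.card V - 2 * k = 2 * r + 1 by omega,
    show k + r + 1 - k = r + 1 by omega, hr, Nat.centralBinom_eq_two_mul_choose]
  ring

end CommonNeighbors

section CentralBinom

theorem centralBinom_succ_mul_lt {k q : ℕ} (h : k < q) :
    (k + 1).centralBinom * q.centralBinom < k.centralBinom * (q + 1).centralBinom := by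
  have hpos := Nat.mul_pos k.centralBinom_pos q.centralBinom_pos
  refine lt_of_mul_lt_mul_left (a := (k + 1) * (q + 1)) ?_ (Nat.zero_le _)
  calc (k + 1) * (q + 1) * ((k + 1).centralBinom * q.centralBinom)
      = (k + 1) * (k + 1).centralBinom * (q + 1) * q.centralBinom := by ring
    _ = 2 * (2 * k + 1) * (q + 1) * (k.centralBinom * q.centralBinom) := by
      rw [Nat.succ_mul_centralBinom_succ]; ring
    _ < 2 * (2 * q + 1) * (k + 1) * (k.centralBinom * q.centralBinom) :=
      Nat.mul_lt_mul_of_pos_right (by linarith) hpos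
    _ = (q + 1) * (q + 1).centralBinom * (k + 1) * k.centralBinom := by
      rw [Nat.succ_mul_centralBinom_succ]; ring
    _ = (k + 1) * (q + 1) * (k.centralBinom * (q + 1).centralBinom) := by ring

theorem strictAntiOn_centralBinom_mul (p : ℕ) :
    StrictAntiOn (fun k ↦ k.centralBinom * (p - k).centralBinom) (Set.Iic (p / 2)) := by
  refine strictAntiOn_Iic_of_succ_lt fun k hk ↦ ?_
  have := centralBinom_succ_mul_lt (k := k) (q := p - (k + 1)) (by omega)
  rwa [show p - (k + 1) + 1 = p - k by omega] at this

theorem min_eq_min_of_centralBinom_mul_eq {p j k : ℕ} (hj : j ≤ p) (hk : k ≤ p)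
    (h : j.centralBinom * (p - j).centralBinom = k.centralBinom * (p - k).centralBinom) :
    min j (p - j) = min k (p - k) := by
  have hmin {i : ℕ} (hi : i ≤ p) : (min i (p - i)).centralBinom * (p - min i (p - i)).centralBinom =
      i.centralBinom * (p - i).centralBinom := by
    rcases min_choice i (p - i) with hm | hm <;> rw [hm]
    rw [Nat.sub_sub_self hi, mul_comm]
  refine (strictAntiOn_centralBinom_mul p).injOn ?_ ?_ (by simp only [hmin, hj, hk, h]) <;>
    simp only [Set.mem_Iic] <;> omega

end CentralBinom

section FoldedDist

variable {V : Type*} [Fintype V]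

/-- The distance in the folded cube on the coordinate set `V`, i.e. the Hamming distance of words
taken modulo complementation `z ↦ z + 1`. -/
def foldedDist (x y : V → ZMod 2) : ℕ :=
  min (hammingDist x y) (Fintype.card V - hammingDist x y)

theorem foldedDist_comm (x y : V → ZMod 2) : foldedDist x y = foldedDist y x := by
  rw [foldedDist, foldedDist, hammingDist_comm]

theorem even_foldedDist_iff (hV : Even (Fintype.card V)) (x y : V → ZMod 2) :
    Even (foldedDist x y) ↔ Even (hammingDist x y) := by
  have hle : hammingDist x y ≤ Fintype.card V := hammingDist_le_card_fintype
  unfold foldedDist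
  grind

theorem foldedDist_comp_perm (τ : Equiv.Perm V) (x y : V → ZMod 2) :
    foldedDist (x ∘ τ) (y ∘ τ) = foldedDist x y := by
  rw [foldedDist, foldedDist, hammingDist_comp_equiv]

theorem foldedDist_eq_two (hV : 4 ≤ Fintype.card V) {x y : V → ZMod 2}
    (h : hammingDist x y = 2) :
    foldedDist x y = 2 := by
  unfold foldedDist
  omega

theorem hammingDist_add_one_left (x y : V → ZMod 2) :
    hammingDist (x + 1) y + hammingDist x y = Fintype.card V := by
  rw [hammingDist_eq_hammingNorm_add, hammingDist_eq_hammingNorm_add, add_right_comm,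
    hammingNorm_add_one]

theorem foldedDist_add_one_left (x y : V → ZMod 2) :
    foldedDist (x + 1) y = foldedDist x y := by
  have := hammingDist_add_one_left x y
  unfold foldedDist
  omega

theorem foldedDist_eq_zero_iff {x y : V → ZMod 2} :
    foldedDist x y = 0 ↔ x = y ∨ x = y + 1 := by
  have := hammingDist_add_one_left y x
  rw [← hammingDist_eq_zero, ← hammingDist_eq_zero, hammingDist_comm x y, hammingDist_comm x]
  unfold foldedDist
  rw [hammingDist_comm x y]
  omega

theorem foldedDist_congr_left {x y : V → ZMod 2} (h : foldedDist x y = 0) (z : V → ZMod 2) :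
    foldedDist x z = foldedDist y z := by
  rcases foldedDist_eq_zero_iff.1 h with rfl | rfl
  · rfl
  · exact foldedDist_add_one_left y z

theorem foldedDist_congr_right {x y : V → ZMod 2} (h : foldedDist x y = 0) (z : V → ZMod 2) :
    foldedDist z x = foldedDist z y := by
  rw [foldedDist_comm z x, foldedDist_comm z y, foldedDist_congr_left h]

end FoldedDist

section PairWord

variable {V : Type*} [DecidableEq V]

/-- The sum of the unit words at `u` and `v`: the word with support `{u, v}` if `u ≠ v`, and the
zero word if `u = v`. -/
def pairWord (u v : V) : V → ZMod 2 := Pi.single u 1 + Pi.single v 1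

theorem pairWord_self (u : V) : pairWord u u = 0 := ZModModule.add_self _

theorem pairWord_add_pairWord (o u v : V) : pairWord o u + pairWord o v = pairWord u v := by
  rw [pairWord, pairWord, pairWord, add_add_add_comm, ZModModule.add_self, zero_add]

variable [Fintype V]

theorem supportEquiv_pairWord {u v : V} (h : u ≠ v) : supportEquiv (pairWord u v) = {u, v} := by
  ext i
  rw [mem_supportEquiv, pairWord, Pi.add_apply, Pi.single_apply, Pi.single_apply, mem_insert,
    mem_singleton]
  split_ifs <;> simp_all

theorem hammingNorm_pairWord {u v : V} (h : u ≠ v) : hammingNorm (pairWord u v) = 2 := by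
  rw [← card_supportEquiv, supportEquiv_pairWord h, card_pair h]

theorem even_hammingNorm_pairWord (u v : V) : Even (hammingNorm (pairWord u v)) := by
  rcases eq_or_ne u v with rfl | h
  · simp [pairWord_self]
  · simp [hammingNorm_pairWord h]

theorem foldedDist_pairWord_pairWord (hV : 4 ≤ Fintype.card V) (o : V) {u v : V} (h : u ≠ v) :
    foldedDist (pairWord o u) (pairWord o v) = 2 := by
  refine foldedDist_eq_two hV ?_
  rw [hammingDist_eq_hammingNorm_add, pairWord_add_pairWord, hammingNorm_pairWord h]

theorem hammingDist_pairWord_add {u v : V} (h : u ≠ v) (z : V → ZMod 2) :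
    hammingDist z (pairWord u v) + 2 * #(supportEquiv z ∩ {u, v}) = hammingNorm z + 2 := by
  rw [← supportEquiv_pairWord h, hammingDist_add_two_mul_card_inter, hammingNorm_pairWord h]

theorem foldedDist_pairWord_eq_iff (hV : 4 ∣ Fintype.card V) {z : V → ZMod 2}
    (hz : Even (hammingNorm z)) {u v : V} (huv : u ≠ v) :
    foldedDist z (pairWord u v) = foldedDist z 0 ↔ z u ≠ z v := by
  have hdist := hammingDist_pairWord_add huv z
  have hle : hammingNorm z ≤ Fintype.card V := hammingNorm_le_card_fintype
  have hle' : hammingDist z (pairWord u v) ≤ Fintype.card V := hammingDist_le_card_fintype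
  have hcard : #(supportEquiv z ∩ {u, v}) = 1 ↔ z u ≠ z v := by
    have huv' : u ∉ ({v} : Finset V) := by simpa
    have hinter : supportEquiv z ∩ {u, v} = ({u, v} : Finset V).filter (z · ≠ 0) := by
      ext; simp [mem_supportEquiv, and_comm]
    rw [hinter, card_filter, sum_insert huv', sum_singleton]
    generalize z u = a, z v = b
    decide +revert
  have hcard_le : #(supportEquiv z ∩ {u, v}) ≤ 2 :=
    (card_le_card inter_subset_right).trans card_le_two
  rw [← hcard, foldedDist, foldedDist, hammingDist_zero_right]
  -- If `z u = z v`, the two distances are even and differ by 2, so their sum is not divisible by 4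
  -- and they cannot be complementary.
  obtain ⟨w, hw⟩ := hz
  omega

end PairWord

section Structure

variable {V : Type*} [Fintype V] [DecidableEq V]

theorem exists_card_eq_two_of_foldedDist_zero {z : V → ZMod 2} (hz : foldedDist z 0 = 2) :
    ∃ s, #s = 2 ∧ foldedDist z (supportEquiv.symm s) = 0 := by
  have hnorm := hammingNorm_add_one z
  rw [foldedDist, hammingDist_zero_right] at hz
  obtain h | h : hammingNorm z = 2 ∨ hammingNorm (z + 1) = 2 := by omega
  · exact ⟨supportEquiv z, h, by simp [foldedDist_eq_zero_iff]⟩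
  · refine ⟨supportEquiv (z + 1), h, ?_⟩
    simp [foldedDist_eq_zero_iff, add_assoc, ZModModule.add_self]

theorem hammingDist_supportEquiv_symm (s t : Finset V) :
    hammingDist (supportEquiv.symm s) (supportEquiv.symm t) = #(s ∆ t) := by
  rw [hammingDist_eq_hammingNorm_add, ← card_supportEquiv, supportEquiv_add,
    Equiv.apply_symm_apply, Equiv.apply_symm_apply]

theorem not_disjoint_of_foldedDist_eq_two (hV : 4 ∣ Fintype.card V) {s t : Finset V}
    (hs : #s = 2) (ht : #t = 2)
    (hst : foldedDist (supportEquiv.symm s) (supportEquiv.symm t) = 2) : ¬Disjoint s t := by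
  intro hdisj
  have := card_symmDiff_add_two_mul_card_inter s t
  rw [disjoint_iff_inter_eq_empty.1 hdisj, card_empty] at this
  rw [foldedDist, hammingDist_supportEquiv_symm] at hst
  omega

theorem exists_mem_foldedDist_eq_zero (hV : Fintype.card V = 4) {s : Finset V} (hs : #s = 2)
    (q : V) : ∃ t, #t = 2 ∧ q ∈ t ∧
      foldedDist (supportEquiv.symm s) (supportEquiv.symm t) = 0 := by
  by_cases hq : q ∈ s
  · exact ⟨s, hs, hq, by simp [foldedDist_eq_zero_iff]⟩
  · refine ⟨sᶜ, by rw [card_compl, hV, hs], mem_compl.2 hq, ?_⟩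
    rw [foldedDist, hammingDist_supportEquiv_symm, ← hnot_eq_compl, symmDiff_hnot_self]
    simp

theorem exists_pairWord_eq_of_mem {s : Finset V} (hs : #s = 2) {q : V} (hq : q ∈ s) :
    ∃ v, supportEquiv.symm s = pairWord q v := by
  obtain ⟨v, hv⟩ := card_eq_one.1 ((card_erase_of_mem hq).trans (by rw [hs]))
  obtain ⟨hvq, -⟩ := mem_erase.1 (hv ▸ mem_singleton_self v)
  exact ⟨v, by rw [Equiv.symm_apply_eq, supportEquiv_pairWord hvq.symm, ← hv, insert_erase hq]⟩

theorem exists_forall_mem_of_foldedDist_eq_two (hV : 4 ∣ Fintype.card V) {α : Type*}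
    {A : Finset α} (hA : 4 ≤ #A) {s : α → Finset V} (hs : ∀ a ∈ A, #(s a) = 2)
    (hdist : ∀ a ∈ A, ∀ b ∈ A, a ≠ b →
      foldedDist (supportEquiv.symm (s a)) (supportEquiv.symm (s b)) = 2) :
    ∃ q, ∀ a ∈ A, q ∈ s a := by
  have hinj : Set.InjOn s A := by
    intro a ha b hb hab
    by_contra hne
    have := hdist a ha b hb hne
    rw [hab, foldedDist_eq_zero_iff.2 (.inl rfl)] at this
    omega
  have hinter : (A.image s : Set (Finset V)).Intersecting := by
    intro t ht u hu
    obtain ⟨a, ha, rfl⟩ := mem_image.1 ht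
    obtain ⟨b, hb, rfl⟩ := mem_image.1 hu
    rcases eq_or_ne a b with rfl | hab
    · rw [disjoint_self, bot_eq_empty, ← card_eq_zero, hs a ha]
      exact two_ne_zero
    · exact not_disjoint_of_foldedDist_eq_two hV (hs a ha) (hs b hb) (hdist a ha b hb hab)
  obtain ⟨q, hq⟩ := exists_forall_mem_of_intersecting (by simpa using hs) hinter
    (by rwa [card_image_of_injOn hinj])
  exact ⟨q, fun a ha ↦ hq _ (mem_image_of_mem s ha)⟩

theorem exists_common_coordinate (hV : 4 ∣ Fintype.card V) {z : V → V → ZMod 2} {o : V}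
    (ho : z o = 0) (hz : ∀ a b, a ≠ b → foldedDist (z a) (z b) = 2) :
    ∃ q, ∀ a ≠ o, ∃ s, #s = 2 ∧ q ∈ s ∧ foldedDist (z a) (supportEquiv.symm s) = 0 := by
  have hpair (a : V) (ha : a ≠ o) :=
    exists_card_eq_two_of_foldedDist_zero (z := z a) (by rw [← ho, hz a o ha])
  choose! s hs hzs using hpair
  by_cases h4 : Fintype.card V = 4
  · -- Three pairs may form a triangle, but complementing those that miss `o` makes `o` common.
    refine ⟨o, fun a ha ↦ ?_⟩
    obtain ⟨t, ht, hot, hst⟩ := exists_mem_foldedDist_eq_zero h4 (hs a ha) o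
    exact ⟨t, ht, hot, by rw [foldedDist_congr_left (hzs a ha), hst]⟩
  · have hcard : 4 ≤ #(univ.erase o) := by
      have := Fintype.card_pos_iff.2 ⟨o⟩
      rw [card_erase_of_mem (mem_univ o), card_univ]
      omega
    obtain ⟨q, hq⟩ := exists_forall_mem_of_foldedDist_eq_two hV hcard (s := s) (by simpa using hs)
      fun a ha b hb hab ↦ by
        rw [← foldedDist_congr_left (hzs a (ne_of_mem_erase ha)),
          ← foldedDist_congr_right (hzs b (ne_of_mem_erase hb)), hz a b hab]
    exact ⟨q, fun a ha ↦ ⟨s a, hs a ha, hq a (by simpa), hzs a ha⟩⟩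

theorem exists_perm_foldedDist_pairWord (hV : 4 ∣ Fintype.card V) {z : V → V → ZMod 2} {o : V}
    (ho : z o = 0) (hz : ∀ a b, a ≠ b → foldedDist (z a) (z b) = 2) :
    ∃ τ : Equiv.Perm V, ∀ a, foldedDist (z a) (pairWord (τ o) (τ a)) = 0 := by
  have h4 : 4 ≤ Fintype.card V := Nat.le_of_dvd (Fintype.card_pos_iff.2 ⟨o⟩) hV
  obtain ⟨q, hq⟩ := exists_common_coordinate hV ho hz
  have hex (a : V) : ∃ v, foldedDist (z a) (pairWord q v) = 0 := by
    rcases eq_or_ne a o with rfl | ha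
    · exact ⟨q, by rw [pairWord_self, ho, foldedDist_eq_zero_iff]; exact .inl rfl⟩
    · obtain ⟨s, hs, hqs, hzs⟩ := hq a ha
      obtain ⟨v, hv⟩ := exists_pairWord_eq_of_mem hs hqs
      exact ⟨v, hv ▸ hzs⟩
  choose π hπ using hex
  have hinj : Function.Injective π := by
    intro a b hab
    by_contra hne
    have := hz a b hne
    rw [foldedDist_congr_left (hπ a), hab, foldedDist_comm, hπ b] at this
    omega
  have hπo : π o = q := by
    by_contra hne
    have := foldedDist_pairWord_pairWord h4 q hne
    rw [pairWord_self, ← ho, foldedDist_comm, hπ o] at this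
    omega
  refine ⟨.ofBijective π hinj.bijective_of_finite, fun a ↦ ?_⟩
  rw [Equiv.ofBijective_apply, Equiv.ofBijective_apply, hπo, hπ a]

end Structure

theorem exists_perm_of_foldedDist_preserving {V : Type*} [Fintype V] [Nonempty V]
    (hV : 4 ∣ Fintype.card V) {g : (V → ZMod 2) → V → ZMod 2} (hg0 : g 0 = 0)
    (hg : ∀ x y, Even (hammingNorm x) → Even (hammingNorm y) →
      foldedDist (g x) (g y) = foldedDist x y) :
    ∃ τ : Equiv.Perm V, ∀ x, Even (hammingNorm x) → foldedDist (g x) (x ∘ τ.symm) = 0 := by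
  classical
  have h4 : 4 ≤ Fintype.card V := Nat.le_of_dvd Fintype.card_pos hV
  have hVeven : Even (Fintype.card V) := even_iff_two_dvd.2 (dvd_trans (by decide) hV)
  obtain ⟨o⟩ := ‹Nonempty V›
  have hpair (a : V) := even_hammingNorm_pairWord o a
  obtain ⟨τ, hτ⟩ := exists_perm_foldedDist_pairWord hV (z := fun a ↦ g (pairWord o a)) (o := o)
    (by simp only [pairWord_self, hg0]) fun a b hab ↦ by
      simp only [hg _ _ (hpair a) (hpair b), foldedDist_pairWord_pairWord h4 o hab]
  refine ⟨τ, fun x hx ↦ ?_⟩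
  have hnorm : foldedDist (g x) 0 = foldedDist x 0 := by
    rw [← hg x 0 hx (by simp), hg0]
  have heven : Even (hammingNorm (g x)) := by
    rw [← hammingDist_zero_right] at hx ⊢
    rwa [← even_foldedDist_iff hVeven, hnorm, even_foldedDist_iff hVeven]
  have hcoord (a : V) : g x (τ o) = g x (τ a) ↔ x o = x a := by
    rcases eq_or_ne o a with rfl | ha
    · simp
    · rw [← not_iff_not, ← ne_eq, ← foldedDist_pairWord_eq_iff hV heven (τ.injective.ne ha),
        ← foldedDist_congr_right (hτ a), hnorm, hg x _ hx (hpair a),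
        foldedDist_pairWord_eq_iff hV hx ha]
  obtain ⟨c, hconst⟩ : ∃ c, ∀ v, g x v = x (τ.symm v) + c := by
    refine ⟨g x (τ o) + x o, fun v ↦ ?_⟩
    have := hcoord (τ.symm v)
    rw [Equiv.apply_symm_apply] at this
    generalize g x (τ o) = b, g x v = c, x o = d, x (τ.symm v) = e at this ⊢
    decide +revert
  have hc : c = 0 ∨ c = 1 := by
    clear hconst
    decide +revert
  rw [foldedDist_eq_zero_iff]
  refine hc.imp ?_ ?_ <;> rintro rfl <;> ext v <;> simp [hconst]

section Isometry

variable {ι : Type*} [Fintype ι] {p : ℕ} {φ : (ι → ZMod 2) → ι → ZMod 2}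

/-- A `p`-isometry of the Boolean cube on the coordinate set `ι`: a bijection preserving the
distance `p`. -/
structure IsPIsometry (p : ℕ) (φ : (ι → ZMod 2) → ι → ZMod 2) : Prop where
  bijective : Function.Bijective φ
  hammingDist_eq : ∀ x y, hammingDist x y = p → hammingDist (φ x) (φ y) = p

theorem IsPIsometry.hammingDist_eq_iff (hφ : IsPIsometry p φ) (x y : ι → ZMod 2) :
    hammingDist (φ x) (φ y) = p ↔ hammingDist x y = p :=
  mem_iff_of_injective_of_mapsTo (hφ.bijective.1.prodMap hφ.bijective.1)
    (A := {q | hammingDist q.1 q.2 = p}) (fun q ↦ hφ.hammingDist_eq q.1 q.2) (x := (x, y))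

theorem IsPIsometry.card_filter_hammingDist [DecidableEq ι] (hφ : IsPIsometry p φ)
    (x y : ι → ZMod 2) :
    #{z | hammingDist (φ x) z = p ∧ hammingDist (φ y) z = p} =
      #{z | hammingDist x z = p ∧ hammingDist y z = p} :=
  (card_equiv (Equiv.ofBijective φ hφ.bijective) (by simp [hφ.hammingDist_eq_iff])).symm

theorem IsPIsometry.even_hammingDist (hφ : IsPIsometry p φ) (hp : Fintype.card ι + 1 = 2 * p)
    {x y : ι → ZMod 2} (hxy : Even (hammingDist x y)) : Even (hammingDist (φ x) (φ y)) := by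
  classical
  obtain ⟨k, hk⟩ := hxy.exists_two_nsmul
  have hcard := two_mul_card_filter_hammingDist hp hk
  have hpos := Nat.mul_pos k.centralBinom_pos (p - k).centralBinom_pos
  rw [← hφ.card_filter_hammingDist] at hcard
  obtain ⟨z, hz⟩ := card_pos.1 (Nat.pos_of_mul_pos_left (hcard ▸ hpos))
  obtain ⟨hxz, hyz⟩ := (mem_filter.1 hz).2
  exact even_hammingDist_of_hammingDist_eq (hxz.trans hyz.symm)

theorem IsPIsometry.min_hammingDist (hφ : IsPIsometry p φ) (hp : Fintype.card ι + 1 = 2 * p)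
    {x y : ι → ZMod 2} (hxy : Even (hammingDist x y)) :
    min (hammingDist (φ x) (φ y)) (Fintype.card ι + 1 - hammingDist (φ x) (φ y)) =
      min (hammingDist x y) (Fintype.card ι + 1 - hammingDist x y) := by
  classical
  have hle : hammingDist x y ≤ Fintype.card ι := hammingDist_le_card_fintype
  have hle' : hammingDist (φ x) (φ y) ≤ Fintype.card ι := hammingDist_le_card_fintype
  obtain ⟨k, hk⟩ := hxy.exists_two_nsmul
  obtain ⟨j, hj⟩ := (hφ.even_hammingDist hp hxy).exists_two_nsmul
  rw [smul_eq_mul] at hk hj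
  have := min_eq_min_of_centralBinom_mul_eq (p := p) (j := j) (k := k) (by omega) (by omega) <| by
    rw [← two_mul_card_filter_hammingDist hp hk, ← two_mul_card_filter_hammingDist hp hj,
      hφ.card_filter_hammingDist]
  omega

end Isometry

section Extension

variable {ι : Type*}

/-- The word obtained from `x` by adding the coordinate `none`, with value `0`. -/
def extend (x : ι → ZMod 2) : Option ι → ZMod 2 := fun o ↦ o.elim 0 x

/-- The word on `ι` representing the class of `z` modulo complementation: `extend (fold z)` is
whichever of `z` and `z + 1` vanishes at `none`. -/
def fold (z : Option ι → ZMod 2) : ι → ZMod 2 := fun i ↦ z (some i) + z none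

theorem extend_zero : extend (0 : ι → ZMod 2) = 0 := by
  ext (_ | _) <;> rfl

theorem extend_add (x y : ι → ZMod 2) : extend (x + y) = extend x + extend y := by
  ext (_ | _) <;> simp [extend]

theorem fold_extend (x : ι → ZMod 2) : fold (extend x) = x := by
  ext; simp [fold, extend]

theorem fold_add_one (z : Option ι → ZMod 2) : fold (z + 1) = fold z := by
  ext i
  simp only [fold, Pi.add_apply, Pi.one_apply]
  rw [add_add_add_comm, ZModModule.add_self, add_zero]

theorem extend_fold (z : Option ι → ZMod 2) :
    extend (fold z) = z ∨ extend (fold z) = z + 1 := by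
  have hnone : z none = 0 ∨ z none = 1 := by generalize z none = a; decide +revert
  refine hnone.imp ?_ ?_ <;> intro h <;> ext (_ | i) <;>
    simp [extend, fold, h, CharTwo.add_self_eq_zero]

/-- The action on words of a permutation `τ` of the `n + 1` coordinates of the folded cube. -/
def foldedPerm (τ : Equiv.Perm (Option ι)) (x : ι → ZMod 2) : ι → ZMod 2 :=
  fold (extend x ∘ τ.symm)

theorem foldedPerm_apply (τ : Equiv.Perm (Option ι)) (x : ι → ZMod 2) (i : ι) :
    foldedPerm τ x i = extend x (τ.symm (some i)) + extend x (τ.symm none) := rfl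

theorem foldedPerm_zero (τ : Equiv.Perm (Option ι)) : foldedPerm τ 0 = 0 := by
  ext i
  simp [foldedPerm_apply, extend_zero]

theorem foldedPerm_add (τ : Equiv.Perm (Option ι)) (x y : ι → ZMod 2) :
    foldedPerm τ (x + y) = foldedPerm τ x + foldedPerm τ y := by
  ext i
  simp only [foldedPerm_apply, extend_add, Pi.add_apply]
  ring

variable [Fintype ι]

theorem hammingDist_extend (x y : ι → ZMod 2) :
    hammingDist (extend x) (extend y) = hammingDist x y := by
  have h : ({o | extend x o ≠ extend y o} : Finset (Option ι)) =
      ({i | x i ≠ y i} : Finset ι).map .some := by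
    ext (_ | i) <;> rw [mem_filter] <;> simp [extend]
  rw [hammingDist, h, card_map, hammingDist]

theorem hammingNorm_extend (x : ι → ZMod 2) : hammingNorm (extend x) = hammingNorm x := by
  rw [← hammingDist_zero_right, ← extend_zero, hammingDist_extend, hammingDist_zero_right]

theorem foldedDist_extend_add_left (w x y : ι → ZMod 2) :
    foldedDist (extend (w + x)) (extend (w + y)) = foldedDist (extend x) (extend y) := by
  simp only [foldedDist, hammingDist_extend, hammingDist_add_left]

theorem even_foldedDist_extend_iff (hι : Odd (Fintype.card ι)) (x y : ι → ZMod 2) :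
    Even (foldedDist (extend x) (extend y)) ↔ Even (hammingDist x y) := by
  rw [even_foldedDist_iff (by rw [Fintype.card_option]; exact hι.add_one), hammingDist_extend]

theorem foldedDist_extend_fold (z : Option ι → ZMod 2) : foldedDist (extend (fold z)) z = 0 :=
  foldedDist_eq_zero_iff.2 (extend_fold z)

theorem fold_eq_fold {z w : Option ι → ZMod 2} (h : foldedDist z w = 0) : fold z = fold w := by
  rcases foldedDist_eq_zero_iff.1 h with rfl | rfl
  exacts [rfl, fold_add_one w]

theorem foldedDist_extend_foldedPerm (τ : Equiv.Perm (Option ι)) (x y : ι → ZMod 2) :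
    foldedDist (extend (foldedPerm τ x)) (extend (foldedPerm τ y)) =
      foldedDist (extend x) (extend y) := by
  rw [foldedPerm, foldedPerm, foldedDist_congr_left (foldedDist_extend_fold _),
    foldedDist_congr_right (foldedDist_extend_fold _), foldedDist_comp_perm]

theorem even_hammingNorm_foldedPerm_iff (hι : Odd (Fintype.card ι)) (τ : Equiv.Perm (Option ι))
    (x : ι → ZMod 2) : Even (hammingNorm (foldedPerm τ x)) ↔ Even (hammingNorm x) := by
  rw [← hammingDist_zero_right, ← foldedPerm_zero τ, ← even_foldedDist_extend_iff hι,
    foldedDist_extend_foldedPerm, even_foldedDist_extend_iff hι, hammingDist_zero_right]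

theorem exists_foldedPerm_of_foldedDist_preserving (hι : 4 ∣ Fintype.card ι + 1)
    {ψ : (ι → ZMod 2) → ι → ZMod 2} (hψ0 : ψ 0 = 0)
    (hψ : ∀ x y, Even (hammingDist x y) →
      foldedDist (extend (ψ x)) (extend (ψ y)) = foldedDist (extend x) (extend y)) :
    ∃ τ : Equiv.Perm (Option ι), ∀ x, Even (hammingNorm x) → ψ x = foldedPerm τ x := by
  rw [← Fintype.card_option] at hι
  have heven : Even (Fintype.card (Option ι)) := even_iff_two_dvd.2 (dvd_trans (by decide) hι)
  have hfold0 : fold (0 : Option ι → ZMod 2) = 0 := by rw [← extend_zero, fold_extend]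
  have hfold (z w : Option ι → ZMod 2) :
      foldedDist (extend (fold z)) (extend (fold w)) = foldedDist z w := by
    rw [foldedDist_congr_left (foldedDist_extend_fold z),
      foldedDist_congr_right (foldedDist_extend_fold w)]
  obtain ⟨τ, hτ⟩ := exists_perm_of_foldedDist_preserving hι (g := fun z ↦ extend (ψ (fold z)))
    (by rw [hfold0, hψ0, extend_zero]) fun z w hz hw ↦ by
      rw [hψ, hfold]
      rw [← hammingDist_extend, ← even_foldedDist_iff heven, hfold, even_foldedDist_iff heven,
        even_hammingDist_iff]
      exact iff_of_true hz hw
  refine ⟨τ, fun x hx ↦ ?_⟩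
  have := fold_eq_fold (hτ (extend x) (by rwa [hammingNorm_extend]))
  rwa [fold_extend, fold_extend] at this

theorem IsPIsometry.foldedDist_extend {p : ℕ} {φ : (ι → ZMod 2) → ι → ZMod 2}
    (hφ : IsPIsometry p φ) (hp : Fintype.card ι + 1 = 2 * p) {x y : ι → ZMod 2}
    (hxy : Even (hammingDist x y)) :
    foldedDist (extend (φ x)) (extend (φ y)) = foldedDist (extend x) (extend y) := by
  simp only [foldedDist, hammingDist_extend, Fintype.card_option, hφ.min_hammingDist hp hxy]

theorem IsPIsometry.exists_foldedPerm {p : ℕ} {φ : (ι → ZMod 2) → ι → ZMod 2}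
    (hφ : IsPIsometry p φ) (hp : Fintype.card ι + 1 = 2 * p) (hp2 : Even p) (b : ι → ZMod 2) :
    ∃ τ : Equiv.Perm (Option ι), ∀ x, Even (hammingDist x b) →
      φ x = foldedPerm τ x + (foldedPerm τ b + φ b) := by
  obtain ⟨τ, hτ⟩ := exists_foldedPerm_of_foldedDist_preserving (ι := ι) (by grind)
    (ψ := fun x ↦ φ b + φ (b + x)) (by simp [ZModModule.add_self]) fun x y hxy ↦ by
      rw [foldedDist_extend_add_left, hφ.foldedDist_extend hp, foldedDist_extend_add_left]
      rwa [hammingDist_add_left]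
  refine ⟨τ, fun x hx ↦ ?_⟩
  have := hτ (b + x) (by rwa [← hammingDist_eq_hammingNorm_add, hammingDist_comm])
  rw [← add_assoc b b x, ZModModule.add_self, zero_add, foldedPerm_add] at this
  rw [← add_assoc, add_comm (foldedPerm τ x), ← this, add_right_comm, ZModModule.add_self, zero_add]

end Extension

section Classification

theorem foldedPerm_eq_comp {ι : Type*} {τ : Equiv.Perm (Option ι)} (hτ : τ none = none)
    (x : ι → ZMod 2) : foldedPerm τ x = x ∘ (Equiv.removeNone τ).symm := by
  have hτ' : τ.symm none = none := (Equiv.option_symm_apply_none_iff τ).2 hτ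
  ext i
  have hi : τ.symm (some i) ≠ none := fun h ↦ by
    simpa using τ.symm.injective (h.trans hτ'.symm)
  rw [foldedPerm_apply, hτ', ← Equiv.removeNone_some _ (Option.ne_none_iff_exists'.1 hi)]
  simp [extend]

theorem hammingDist_foldedPerm_add {ι : Type*} [Fintype ι] {τ : Equiv.Perm (Option ι)}
    (hτ : τ none = none) (a x y : ι → ZMod 2) :
    hammingDist (foldedPerm τ x + a) (foldedPerm τ y + a) = hammingDist x y := by
  rw [add_comm _ a, add_comm _ a, hammingDist_add_left, foldedPerm_eq_comp hτ,
    foldedPerm_eq_comp hτ, hammingDist_comp_equiv]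

theorem bijective_foldedPerm_add {ι : Type*} [Finite ι] {τ : Equiv.Perm (Option ι)}
    (hτ : τ none = none) (a : ι → ZMod 2) : Function.Bijective fun x ↦ foldedPerm τ x + a := by
  simp only [foldedPerm_eq_comp hτ]
  exact ((Equiv.removeNone τ).arrowCongr (.refl _)).trans (Equiv.addRight a) |>.bijective

theorem exists_sigmaMap_eq_foldedPerm {n : ℕ} {τ : Equiv.Perm (Option (Fin n))}
    (hτ : τ none ≠ none) :
    ∃ (i j : Fin n) (σ : {k : Fin n // k ≠ i} ≃ {k : Fin n // k ≠ j}),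
      sigmaMap n i j σ = foldedPerm τ := by
  have hτ' : τ.symm none ≠ none := (Equiv.option_symm_apply_none_iff τ).not.2 hτ
  obtain ⟨i, hi⟩ := Option.ne_none_iff_exists'.1 hτ'
  obtain ⟨j, hj⟩ := Option.ne_none_iff_exists'.1 hτ
  have hij : Equiv.removeNone τ i = j :=
    Option.some_injective _ (((Equiv.some_removeNone_iff τ).2 hi).trans hj)
  refine ⟨i, j, (Equiv.removeNone τ).subtypeEquiv fun k ↦ ?_, ?_⟩
  · rw [← hij, (Equiv.removeNone τ).injective.ne_iff]
  · ext x k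
    rw [foldedPerm_apply, hi, sigmaMap]
    split_ifs with hk
    · rw [hk, ← hj, Equiv.symm_apply_apply]
      simp [extend]
    · have hk' : τ.symm (some k) ≠ none := fun h ↦ hk <| by
        rw [Equiv.symm_apply_eq, hj] at h
        exact Option.some_injective _ h
      rw [← Equiv.removeNone_some _ (Option.ne_none_iff_exists'.1 hk')]
      rfl

theorem IsPIsometry.odd_hammingNorm {ι : Type*} [Fintype ι] {p : ℕ}
    {φ : (ι → ZMod 2) → ι → ZMod 2} (hφ : IsPIsometry p φ) (hp : Fintype.card ι + 1 = 2 * p)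
    (h0 : φ 0 = 0) {x : ι → ZMod 2} (hx : Odd (hammingNorm x)) : Odd (hammingNorm (φ x)) := by
  have heven : Set.MapsTo φ {x | Even (hammingNorm x)} {x | Even (hammingNorm x)} := fun y hy ↦ by
    have hy : Even (hammingDist y 0) := by rwa [hammingDist_zero_right]
    have := hφ.even_hammingDist hp hy
    rwa [h0, hammingDist_zero_right] at this
  rw [← Nat.not_even_iff_odd] at hx ⊢
  exact (mem_iff_of_injective_of_mapsTo hφ.bijective.1 heven).not.2 hx

theorem IsPIsometry.exists_foldedPerm_on_even_odd {ι : Type*} [Fintype ι] {p : ℕ}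
    {φ : (ι → ZMod 2) → ι → ZMod 2} (hφ : IsPIsometry p φ) (hp : Fintype.card ι + 1 = 2 * p)
    (hp2 : Even p) (h0 : φ 0 = 0) :
    ∃ (τ ρ : Equiv.Perm (Option ι)) (a : ι → ZMod 2), Even (hammingNorm a) ∧
      (∀ c, Even (hammingNorm c) → φ c = foldedPerm τ c) ∧
      ∀ c, Odd (hammingNorm c) → φ c = foldedPerm ρ c + a := by
  have hodd : Odd (Fintype.card ι) := by grind
  have hone : Odd (hammingNorm (1 : ι → ZMod 2)) := by simpa [hammingNorm] using hodd
  obtain ⟨τ, hτ⟩ := hφ.exists_foldedPerm hp hp2 0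
  obtain ⟨ρ, hρ⟩ := hφ.exists_foldedPerm hp hp2 1
  refine ⟨τ, ρ, _, ?_, fun c hc ↦ ?_, fun c hc ↦ hρ c ?_⟩
  · have hφ1 := hφ.odd_hammingNorm hp h0 hone
    rw [← hammingDist_eq_hammingNorm_add, even_hammingDist_iff,
      even_hammingNorm_foldedPerm_iff hodd]
    simp only [← Nat.not_odd_iff_even, hφ1, hone]
  · simpa [h0, foldedPerm_zero] using hτ c (by rwa [hammingDist_zero_right])
  · rw [even_hammingDist_iff, ← not_iff_not, Nat.not_even_iff_odd, Nat.not_even_iff_odd]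
    exact iff_of_true hc hone

theorem hammingDist_eq_of_eq_foldedPerm_on_even_odd {ι : Type*} [Fintype ι]
    {φ : (ι → ZMod 2) → ι → ZMod 2} {τ ρ : Equiv.Perm (Option ι)} {a : ι → ZMod 2}
    (hτ : τ none = none) (hρ : ρ none = none)
    (heven : ∀ c, Even (hammingNorm c) → φ c = foldedPerm τ c)
    (hodd : ∀ c, Odd (hammingNorm c) → φ c = foldedPerm ρ c + a) {x y : ι → ZMod 2}
    (hxy : Even (hammingDist x y)) : hammingDist (φ x) (φ y) = hammingDist x y := by
  rw [even_hammingDist_iff] at hxy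
  by_cases hx : Even (hammingNorm x)
  · simpa [heven x hx, heven y (hxy.1 hx)] using hammingDist_foldedPerm_add hτ 0 x y
  · have hy := hxy.not.1 hx
    rw [Nat.not_even_iff_odd] at hx hy
    rw [hodd x hx, hodd y hy, hammingDist_foldedPerm_add hρ]

end Classification

end BooleanCube

open BooleanCube

/-- For `n ≡ 3 (mod 4)`: every `(n+1)/2`-isometry of `C_n` fixing `0̄` that is not an even
isometry either (I) acts as an even isometry on the even-weight words and as
`T_a ∘ τ` (with `τ` a `σ_{i,j}`-mapping and `a` of even weight) on the odd-weight words,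
or (II) acts as a `σ_{i,j}`-mapping on the even-weight words and as an even isometry on
the odd-weight words, or (III) acts as a `σ_{i,j}`-mapping `τ₁` on the even-weight words
and as `T_a ∘ τ₂` (with `τ₂` a `σ_{k,l}`-mapping and `a` of even weight) on the
odd-weight words. -/
theorem halfPlusOneIsometry_classification_three_mod_four (n : ℕ) (hn : n % 4 = 3)
    (φ : (Fin n → ZMod 2) → Fin n → ZMod 2)
    (hbij : Function.Bijective φ) (h0 : φ 0 = 0)
    (hφ : ∀ x y, hammingDist x y = (n + 1) / 2 →
      hammingDist (φ x) (φ y) = (n + 1) / 2)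
    (hne : ¬(∀ x y, Even (hammingDist x y) →
      hammingDist (φ x) (φ y) = hammingDist x y)) :
    -- Case I
    (∃ ψ : (Fin n → ZMod 2) → Fin n → ZMod 2,
      (Function.Bijective ψ ∧ ∀ x y, Even (hammingDist x y) →
        hammingDist (ψ x) (ψ y) = hammingDist x y) ∧
      (∀ c, Even (hammingNorm c) → φ c = ψ c) ∧
      ∃ (i j : Fin n) (σ : {k : Fin n // k ≠ i} ≃ {k : Fin n // k ≠ j})
        (a : Fin n → ZMod 2), Even (hammingNorm a) ∧
        ∀ c, Odd (hammingNorm c) → φ c = sigmaMap n i j σ c + a) ∨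
    -- Case II
    (∃ (i j : Fin n) (σ : {k : Fin n // k ≠ i} ≃ {k : Fin n // k ≠ j}),
      (∀ c, Even (hammingNorm c) → φ c = sigmaMap n i j σ c) ∧
      ∃ ψ : (Fin n → ZMod 2) → Fin n → ZMod 2,
        (Function.Bijective ψ ∧ ∀ x y, Even (hammingDist x y) →
          hammingDist (ψ x) (ψ y) = hammingDist x y) ∧
        ∀ c, Odd (hammingNorm c) → φ c = ψ c) ∨
    -- Case III
    (∃ (i j : Fin n) (σ₁ : {k : Fin n // k ≠ i} ≃ {k : Fin n // k ≠ j})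
        (k l : Fin n) (σ₂ : {m : Fin n // m ≠ k} ≃ {m : Fin n // m ≠ l})
        (a : Fin n → ZMod 2), Even (hammingNorm a) ∧
      (∀ c, Even (hammingNorm c) → φ c = sigmaMap n i j σ₁ c) ∧
      (∀ c, Odd (hammingNorm c) → φ c = sigmaMap n k l σ₂ c + a)) := by
  have hp : Fintype.card (Fin n) + 1 = 2 * ((n + 1) / 2) := by
    rw [Fintype.card_fin]
    omega
  have hp2 : Even ((n + 1) / 2) := by
    rw [Nat.even_iff]
    omega
  obtain ⟨τ, ρ, a, ha, hE, hO⟩ :=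
    IsPIsometry.exists_foldedPerm_on_even_odd ⟨hbij, hφ⟩ hp hp2 h0
  by_cases hτ : τ none = none <;> by_cases hρ : ρ none = none
  · exact absurd (fun x y ↦ hammingDist_eq_of_eq_foldedPerm_on_even_odd hτ hρ hE hO) hne
  · obtain ⟨i, j, σ, hσ⟩ := exists_sigmaMap_eq_foldedPerm hρ
    refine .inl ⟨fun x ↦ foldedPerm τ x + 0, ⟨bijective_foldedPerm_add hτ 0,
      fun x y _ ↦ hammingDist_foldedPerm_add hτ 0 x y⟩, by simpa, i, j, σ, a, ha, ?_⟩
    simpa only [hσ]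
  · obtain ⟨i, j, σ, hσ⟩ := exists_sigmaMap_eq_foldedPerm hτ
    refine .inr (.inl ⟨i, j, σ, by simpa only [hσ], fun x ↦ foldedPerm ρ x + a,
      ⟨bijective_foldedPerm_add hρ a, fun x y _ ↦ hammingDist_foldedPerm_add hρ a x y⟩, hO⟩)
  · obtain ⟨i, j, σ₁, hσ₁⟩ := exists_sigmaMap_eq_foldedPerm hτ
    obtain ⟨k, l, σ₂, hσ₂⟩ := exists_sigmaMap_eq_foldedPerm hρ
    refine .inr (.inr ⟨i, j, σ₁, k, l, σ₂, a, ha, ?_, ?_⟩) <;> simpa only [hσ₁, hσ₂]
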